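/- arXiv:2410.13600 — 4 statements merged into one kernel-verified Lean document; each statement's English description precedes it below -/
import Mathlib

section
/- Let K be an algebraically closed field of characteristic p > 2, let t be an odd prime with t ≠ p, let ζ ∈ Kˣ be a primitive t-th root of unity, and set n := 2t. Then the map β : (Z_n × Z_n) × (Z_n × Z_n) → Kˣ defined on standard representatives by β((i,j),(k,l)) := (-1)^{ik+jl} · ζ^{jk} · ζ^{-il} is a well-defined bicharacter of Z_n × Z_n with values in Kˣ. -/
theorem aux_ac {G : Type*} [CommGroup G] (a a' b b' c c' d d' : G) :
    a * a' * (b * b') * (c * c') * (d * d') = a * b * c * d * (a' * b' * c' * d') := by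
  rw [mul_mul_mul_comm a, mul_mul_mul_comm (a * b), mul_mul_mul_comm (a * b * c)]

theorem aux_pow {G : Type*} [CommGroup G] (n : ℕ) [NeZero n] (x : G) (hx : x ^ n = 1)
    (a b : ZMod n) (c : ℕ) :
    x ^ ((a + b).val * c) = x ^ (a.val * c) * x ^ (b.val * c) := by
  have h : x ^ (a + b).val = x ^ (a.val + b.val) := by
    rw [ZMod.val_add]; exact (pow_eq_pow_mod _ hx).symm
  rw [pow_mul, h, ← pow_mul, add_mul, pow_add]

theorem aux_pow2 {G : Type*} [CommGroup G] (n : ℕ) [NeZero n] (x : G) (hx : x ^ n = 1)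
    (a b : ZMod n) (c : ℕ) :
    x ^ (c * (a + b).val) = x ^ (c * a.val) * x ^ (c * b.val) := by
  simp only [mul_comm c, aux_pow n x hx]

/-- For an algebraically closed field `K` of characteristic `p > 2`, an odd
prime `t ≠ p`, `ζ ∈ Kˣ` a primitive `t`-th root of unity, and `n := 2t`, the map
`β((i,j),(k,l)) := (-1)^(ik+jl) * ζ^(jk) * ζ^(-il)` (on standard representatives) is a
well-defined bicharacter of `Z_n × Z_n` with values in `Kˣ`. -/
theorem stmt_4 (K : Type*) [Field K] [IsAlgClosed K] (p : ℕ) (hchar : CharP K p)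
    (hp : 2 < p) (t : ℕ) (ht : t.Prime) (htodd : Odd t) (htp : t ≠ p)
    (ζ : Kˣ) (hζ : orderOf ζ = t) :
    ∀ β : ZMod (2 * t) × ZMod (2 * t) → ZMod (2 * t) × ZMod (2 * t) → Kˣ,
      (∀ g h, β g h =
        (-1 : Kˣ) ^ (g.1.val * h.1.val + g.2.val * h.2.val) * ζ ^ (g.2.val * h.1.val) *
          ζ ^ (-((g.1.val * h.2.val : ℕ) : ℤ))) →
      (∀ g h, β g h = (β h g)⁻¹) ∧
        (∀ g h k, β g (h + k) = β g h * β g k) ∧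
        (∀ g h k, β (g + k) h = β g h * β k h) := by
  intro β hβ
  have hz : ζ ^ (2 * t) = 1 := by
    rw [mul_comm, pow_mul, ← hζ, pow_orderOf_eq_one, one_pow]
  have hm : (-1 : Kˣ) ^ (2 * t) = 1 := by
    rw [pow_mul]; simp
  have : NeZero (2 * t) := ⟨by have := ht.pos; omega⟩
  refine ⟨fun g h => ?_, fun g h k => ?_, fun g h k => ?_⟩
  · rw [hβ, hβ]
    have e : ∀ m : ℕ, ((-1 : Kˣ) ^ m)⁻¹ = (-1) ^ m := fun m => by
      rw [← inv_pow]; simp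
    simp only [zpow_neg, zpow_natCast, mul_inv, inv_inv, e]
    rw [mul_comm h.1.val g.1.val, mul_comm h.2.val g.2.val, mul_comm h.2.val g.1.val,
      mul_comm h.1.val g.2.val]
    exact mul_right_comm _ _ _
  · simp only [hβ, zpow_neg, zpow_natCast, Prod.fst_add, Prod.snd_add, pow_add,
      aux_pow2 _ _ hz, aux_pow2 _ _ hm, mul_inv]
    exact aux_ac _ _ _ _ _ _ _ _
  · simp only [hβ, zpow_neg, zpow_natCast, Prod.fst_add, Prod.snd_add, pow_add,
      aux_pow _ _ hz, aux_pow _ _ hm, mul_inv]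
    exact aux_ac _ _ _ _ _ _ _ _
end

section
/- Let K be a field, let G be an additive abelian group, and let α : G × G → Kˣ be a 2-cocycle. Then the map β : G × G → Kˣ defined by β(g,h) := α(g,h)·α(h,g)⁻¹ is a bicharacter of G; that is, β(g,h) = β(h,g)⁻¹, β(g,h+k) = β(g,h)·β(g,k), and β(g+k,h) = β(g,h)·β(k,h) for all g, h, k ∈ G. -/
/-- If `α` is a 2-cocycle on an additive abelian group `G` with values in
`Kˣ`, then `β(g,h) := α(g,h) * α(h,g)⁻¹` is a bicharacter of `G`. -/
theorem stmt_16 (K : Type*) [Field K] (G : Type*) [AddCommGroup G]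
    (α : G → G → Kˣ)
    (hα : ∀ σ τ ν : G, α σ (τ + ν) * α τ ν = α (σ + τ) ν * α σ τ)
    (β : G → G → Kˣ) (hβ : ∀ g h, β g h = α g h * (α h g)⁻¹) :
    (∀ g h, β g h = (β h g)⁻¹) ∧
      (∀ g h k, β g (h + k) = β g h * β g k) ∧
      (∀ g h k, β (g + k) h = β g h * β k h) := by
  have h1 : ∀ g h, β g h = (β h g)⁻¹ := by
    intro g h
    rw [hβ, hβ, mul_inv, inv_inv, mul_comm]
  have h2 : ∀ g h k, β g (h + k) = β g h * β g k := by
    intro g h k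
    have e1 : α g (h + k) = α (g + h) k * α g h * (α h k)⁻¹ :=
      eq_mul_inv_of_mul_eq (hα g h k)
    have e2 : α (h + k) g = α h (g + k) * α k g * (α h k)⁻¹ := by
      rw [add_comm g k]
      exact eq_mul_inv_of_mul_eq (hα h k g).symm
    have e3 : α h (g + k) = α (g + h) k * α h g * (α g k)⁻¹ := by
      rw [add_comm g h]
      exact eq_mul_inv_of_mul_eq (hα h g k)
    rw [hβ, hβ, hβ, e1, e2, e3]
    apply Units.ext
    push_cast
    field_simp
  refine ⟨h1, h2, ?_⟩
  intro g h k
  rw [h1, h2, mul_inv, ← h1, ← h1]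
end

section
/- (Scheunert's Lemma) Let K be a field, let G be a finite abelian group, and let β : G × G → Kˣ be a bicharacter of G with β(g,g) = 1 for every g ∈ G. Then there exists a 2-cocycle α : G × G → Kˣ such that β(g,h) = α(g,h)·α(h,g)⁻¹ for all g, h ∈ G. -/
/-- Scheunert's Lemma: If `β` is a bicharacter of a finite abelian group `G`
with values in `Kˣ` satisfying `β(g,g) = 1` for all `g`, then there is a 2-cocycle
`α : G × G → Kˣ` with `β(g,h) = α(g,h) * α(h,g)⁻¹` for all `g, h`. -/
theorem stmt_18 (K : Type*) [Field K] (G : Type*) [AddCommGroup G] [Fintype G]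
    (β : G → G → Kˣ)
    (hβ_inv : ∀ g h, β g h = (β h g)⁻¹)
    (hβ_right : ∀ g h k, β g (h + k) = β g h * β g k)
    (hβ_left : ∀ g h k, β (g + k) h = β g h * β k h)
    (hdiag : ∀ g : G, β g g = 1) :
    ∃ α : G → G → Kˣ,
      (∀ σ τ ν : G, α σ (τ + ν) * α τ ν = α (σ + τ) ν * α σ τ) ∧
      ∀ g h : G, β g h = α g h * (α h g)⁻¹ := by
  classical
  let R : G → (G →+ Additive Kˣ) := fun g =>
    AddMonoidHom.mk' (fun h => Additive.ofMul (β g h)) (fun h k => hβ_right g h k)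
  let L : G → (G →+ Additive Kˣ) := fun h =>
    AddMonoidHom.mk' (fun g => Additive.ofMul (β g h)) (fun g k => hβ_left g h k)
  have hRs : ∀ {ι : Type} (s : Finset ι) (g : G) (f : ι → G),
      β g (∑ i ∈ s, f i) = ∏ i ∈ s, β g (f i) := fun s g f => map_sum (R g) f s
  have hLs : ∀ {ι : Type} (s : Finset ι) (h : G) (f : ι → G),
      β (∑ i ∈ s, f i) h = ∏ i ∈ s, β (f i) h := fun s h f => map_sum (L h) f s
  have hRz : ∀ (g h : G) (k : ℤ), β g (k • h) = β g h ^ k := fun g h k => map_zsmul (R g) k h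
  have hLz : ∀ (g h : G) (k : ℤ), β (k • g) h = β g h ^ k := fun g h k => map_zsmul (L h) k g
  obtain ⟨ι, _, n, hn, ⟨e⟩⟩ := AddCommGroup.equiv_directSum_zmod_of_finite' G
  letI : LinearOrder ι := linearOrderOfSTO (WellOrderingRel)
  let P : ι → G → G := fun i g => e.symm (DirectSum.of (fun i => ZMod (n i)) i (e g i))
  have hPadd : ∀ i g h, P i (g + h) = P i g + P i h := by
    intro i g h
    simp [P, DirectSum.add_apply]
  have hPsum : ∀ g, ∑ i, P i g = g := by
    intro g
    simp only [P]
    rw [← map_sum, DirectSum.sum_univ_of, e.symm_apply_apply]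
  have hPz : ∀ i g, ∃ k : ℤ, P i g = k • e.symm (DirectSum.of (fun i => ZMod (n i)) i 1) := by
    intro i g
    obtain ⟨k, hk⟩ := ZMod.intCast_surjective (e g i)
    refine ⟨k, ?_⟩
    simp only [P]
    rw [← hk, ← map_zsmul, ← map_zsmul, zsmul_one]
  have hPP : ∀ i g h, β (P i g) (P i h) = 1 := by
    intro i g h
    obtain ⟨k, hk⟩ := hPz i g
    obtain ⟨l, hl⟩ := hPz i h
    rw [hk, hl, hRz, hLz, hdiag]; simp
  let α : G → G → Kˣ := fun g h => ∏ i, ∏ j, if i < j then β (P i g) (P j h) else 1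
  have hαr : ∀ g h k, α g (h + k) = α g h * α g k := by
    intro g h k
    simp only [α, ← Finset.prod_mul_distrib]
    refine Finset.prod_congr rfl fun i _ => Finset.prod_congr rfl fun j _ => ?_
    split_ifs <;> simp [hPadd, hβ_right]
  have hαl : ∀ g h k, α (g + k) h = α g h * α k h := by
    intro g h k
    simp only [α, ← Finset.prod_mul_distrib]
    refine Finset.prod_congr rfl fun i _ => Finset.prod_congr rfl fun j _ => ?_
    split_ifs <;> simp [hPadd, hβ_left]
  refine ⟨α, ?_, ?_⟩
  · intro σ τ ν
    rw [hαr, hαl]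
    ac_rfl
  · intro g h
    have h1 : β g h = ∏ i, ∏ j, β (P i g) (P j h) := by
      conv_lhs => rw [← hPsum g, ← hPsum h, hLs]
      exact Finset.prod_congr rfl fun i _ => hRs _ _ _
    have h2 : α h g = ∏ i, ∏ j, if j < i then β (P j h) (P i g) else 1 := Finset.prod_comm
    rw [h1, h2]
    simp only [α, ← Finset.prod_inv_distrib, ← Finset.prod_mul_distrib]
    refine Finset.prod_congr rfl fun i _ => Finset.prod_congr rfl fun j _ => ?_
    rcases lt_trichotomy i j with hij | hij | hij
    · simp [hij, hij.not_gt]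
    · subst hij; simp [hPP]
    · simp only [hij, hij.not_gt, if_true, if_false, one_mul]
      exact hβ_inv _ _
end

section
/- Let K be an infinite field of characteristic p > 2. Then there exist a nontrivial finite abelian group H whose order is not divisible by p, and a bicharacter β : H × H → Kˣ such that β(g,g) = 1 for all g ∈ H, β is nondegenerate (for every s ≠ 0 in H there exists x ∈ H with β(s,x) ≠ 1), and the determinant of the H × H matrix over K with entries β(g,h) is nonzero. -/
def epsV (g h : ZMod 2 × ZMod 2) : ℤˣ := if g.1 * h.2 + g.2 * h.1 = 0 then 1 else -1

theorem epsV_sq : (Matrix.of fun g h : ZMod 2 × ZMod 2 => ((epsV g h : ℤˣ) : ℤ)) *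
    (Matrix.of fun g h : ZMod 2 × ZMod 2 => ((epsV g h : ℤˣ) : ℤ)) =
    (4 : ℤ) • (1 : Matrix (ZMod 2 × ZMod 2) (ZMod 2 × ZMod 2) ℤ) := by
  decide

/-- Over an infinite field `K` of characteristic `p > 2`, there exist a
nontrivial finite abelian group `H` of order not divisible by `p` and a bicharacter `β` of
`H` with `β(g,g) = 1` for all `g`, which is nondegenerate and whose decomposition matrix
`(β(g,h))` has nonzero determinant. -/
theorem stmt_19 (K : Type*) [Field K] [Infinite K] (p : ℕ) (hchar : CharP K p)
    (hp : 2 < p) :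
    ∃ (H : Type) (_ : AddCommGroup H) (_ : Fintype H) (_ : DecidableEq H),
      Nontrivial H ∧ ¬ (p ∣ Fintype.card H) ∧
      ∃ β : H → H → Kˣ,
        (∀ g h, β g h = (β h g)⁻¹) ∧
        (∀ g h k, β g (h + k) = β g h * β g k) ∧
        (∀ g h k, β (g + k) h = β g h * β k h) ∧
        (∀ g : H, β g g = 1) ∧
        (∀ s : H, s ≠ 0 → ∃ x : H, β s x ≠ 1) ∧
        Matrix.det (Matrix.of fun g h : H => ((β g h : Kˣ) : K)) ≠ 0 := by
  have hpp : p.Prime := (CharP.char_is_prime_or_zero K p).resolve_right (by omega)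
  have h4 : ¬ p ∣ 2 ^ 2 := fun h => by
    have := Nat.le_of_dvd (by norm_num) (hpp.dvd_of_dvd_pow h)
    omega
  have hne : ((-1 : ℤ) : K) ≠ 1 := by
    intro h
    have h2 : ((2 : ℕ) : K) = 0 := by
      push_cast at h ⊢
      linear_combination -h
    rw [CharP.cast_eq_zero_iff K p] at h2
    exact h4 (h2.trans (by norm_num))
  refine ⟨ZMod 2 × ZMod 2, inferInstance, inferInstance, inferInstance, inferInstance, ?_,
    fun g h => Units.map (Int.castRingHom K : ℤ →* K) (epsV g h), ?_, ?_, ?_, ?_, ?_, ?_⟩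
  · have : Fintype.card (ZMod 2 × ZMod 2) = 2 ^ 2 := by decide
    rwa [this]
  · intro g h
    rw [← map_inv]
    exact congrArg _ ((by decide : ∀ g h, epsV g h = (epsV h g)⁻¹) g h)
  · intro g h k
    rw [← map_mul]
    exact congrArg _ ((by decide : ∀ g h k, epsV g (h + k) = epsV g h * epsV g k) g h k)
  · intro g h k
    rw [← map_mul]
    exact congrArg _ ((by decide : ∀ g h k, epsV (g + k) h = epsV g h * epsV k h) g h k)
  · intro g
    beta_reduce
    rw [(by decide : ∀ g, epsV g g = 1) g, map_one]
  · intro s hs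
    obtain ⟨x, hx⟩ := (by decide : ∀ s, s ≠ 0 → ∃ x, epsV s x = -1) s hs
    refine ⟨x, fun h => hne ?_⟩
    beta_reduce at h
    rw [hx] at h
    simpa using congrArg (Units.val) h
  · intro h0
    have e : (Matrix.of fun g h : ZMod 2 × ZMod 2 =>
        ((Units.map (Int.castRingHom K : ℤ →* K) (epsV g h) : Kˣ) : K)) =
        (Int.castRingHom K).mapMatrix (Matrix.of fun g h => ((epsV g h : ℤˣ) : ℤ)) := by
      ext g h
      simp
    rw [e, ← RingHom.map_det] at h0
    have h1 := congrArg Matrix.det epsV_sq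
    rw [Matrix.det_mul, Matrix.det_smul, Matrix.det_one] at h1
    have h2 := congrArg (Int.castRingHom K) h1
    rw [map_mul, h0] at h2
    have hc : Fintype.card (ZMod 2 × ZMod 2) = 4 := by decide
    rw [hc] at h2
    have h3 : ((2 ^ 8 : ℕ) : K) = 0 := by
      simp at h2
      push_cast
      first | linear_combination -h2 | (rw [show (2:K)^8 = 4^4 by norm_num, h2]; norm_num)
    rw [CharP.cast_eq_zero_iff K p] at h3
    exact h4 ((hpp.dvd_of_dvd_pow h3).trans (by norm_num))
end
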